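/- arXiv:2206.03533 — 2 statements merged into one kernel-verified Lean document; each statement's English description precedes it below -/
import Mathlib

section
/- Let R be a coherent ring and 0 → M'' → M' → M → 0 exact with M w-FP-projective. Then M' is w-FP-projective if and only if M'' is w-FP-projective. -/
open CategoryTheory

universe u

noncomputable section

variable (R : Type u) [CommRing R]

/-- The Ext group `Ext^n_R(M, N)` as an `R`-module (via `ModuleCat`). -/
def extMod (M N : Type u) [AddCommGroup M] [Module R M]
    [AddCommGroup N] [Module R N] (n : ℕ) : ModuleCat R :=
  ((Ext R (ModuleCat R) n).obj (Opposite.op (ModuleCat.of R M))).obj (ModuleCat.of R N)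

/-- `J` is a Glaz–Vasconcelos ideal: finitely generated and the natural map
`R → Hom_R(J, R)` is bijective. -/
def IsGVIdeal (J : Ideal R) : Prop :=
  J.FG ∧ Function.Bijective (fun r : R => (r • J.subtype : J →ₗ[R] R))

/-- A module is GV-torsion if every element is annihilated by some GV-ideal. -/
def IsGVTorsion (M : Type u) [AddCommGroup M] [Module R M] : Prop :=
  ∀ x : M, ∃ J : Ideal R, IsGVIdeal R J ∧ ∀ j ∈ J, j • x = 0

/-- An ideal `I` is a `w`-ideal if it is `w`-closed: whenever `J x ⊆ I` for some
GV-ideal `J`, one has `x ∈ I`. -/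
def IsWIdeal (I : Ideal R) : Prop :=
  ∀ (x : R) (J : Ideal R), IsGVIdeal R J → (∀ j ∈ J, j * x ∈ I) → x ∈ I

/-- `R` is a DW-ring if every maximal ideal is a `w`-ideal. -/
def IsDWRing : Prop :=
  ∀ m : Ideal R, m.IsMaximal → IsWIdeal R m

/-- `A` is absolutely `w`-pure if `Ext^1_R(N, A)` is GV-torsion for every
finitely presented module `N`. -/
def IsAbsolutelyWPure (A : Type u) [AddCommGroup A] [Module R A] : Prop :=
  ∀ (N : Type u) [AddCommGroup N] [Module R N], Module.FinitePresentation R N →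
    IsGVTorsion R (extMod R N A 1)

/-- `M` is `w`-FP-projective if `Ext^1_R(M, A) = 0` for every absolutely
`w`-pure module `A`. -/
def IsWFPProjective (M : Type u) [AddCommGroup M] [Module R M] : Prop :=
  ∀ (A : Type u) [AddCommGroup A] [Module R A], IsAbsolutelyWPure R A →
    Subsingleton (extMod R M A 1)

end
def IsCoherentRing (R : Type u) [CommRing R] : Prop :=
  ∀ I : Ideal R, I.FG → Module.FinitePresentation R I

/-!
For `A` absolutely `w`-pure, consider the long exact sequence
`Ext¹(M, A) → Ext¹(M', A) → Ext¹(M'', A) → Ext²(M, A)`, whose outer terms vanish. To see this for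
`Ext²(M, A)`, embed `A` into an injective module `E`: then `Ext²(M, A) ≅ Ext¹(M, E ⧸ A)`, so it
suffices that `E ⧸ A` is again absolutely `w`-pure. For `N` finitely presented,
`Ext¹(N, E ⧸ A) ≅ Ext²(N, A)` is a quotient of `Ext¹(K, A)`, where `K` is the kernel of a surjection
from a finite free module onto `N`. Coherence makes `K` finitely presented, hence `Ext¹(K, A)`
GV-torsion.

`extMod` is a derived functor of `Hom`, whereas the long exact sequences are available for
`Abelian.Ext`, which is defined by morphisms in the derived category; the two are identified by
comparing both to cocycles modulo coboundaries of a projective resolution.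
-/

section Comparison

variable {R : Type*} [Ring R] {C : Type*} [Category* C] [Abelian C] [Linear R C]
  [HasExt C] {X : C} (P : ProjectiveResolution X)

lemma smul_extMk {Y : C} {n m : ℕ} (r : R) (φ : P.complex.X n ⟶ Y) (hm : n + 1 = m)
    (hφ : P.complex.d m n ≫ φ = 0) :
    r • P.extMk φ m hm hφ = P.extMk (r • φ) m hm (by simp [hφ]) := by
  rw [Abelian.Ext.smul_eq_comp_mk₀, P.extMk_comp_mk₀]
  simp

variable (R) in
/-- The linear map sending an `n`-cocycle of `Hom(P, Y)`, for a projective resolution `P` of `X`, to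
its class in `Ext X Y n`. -/
noncomputable def cocycleClass (Y : C) (n : ℕ) :
    LinearMap.ker (Linear.leftComp R Y (P.complex.d (n + 1) n)) →ₗ[R] Abelian.Ext X Y n where
  toFun φ := P.extMk φ.1 (n + 1) rfl φ.2
  map_add' φ ψ := (P.add_extMk φ.1 ψ.1 (n + 1) rfl φ.2 ψ.2).symm
  map_smul' r φ := (smul_extMk P r φ.1 rfl φ.2).symm

lemma cocycleClass_surjective (Y : C) (n : ℕ) :
    Function.Surjective (cocycleClass R P Y n) := fun α ↦
  let ⟨φ, hφ, hα⟩ := P.extMk_surjective α (n + 1) rfl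
  ⟨⟨φ, hφ⟩, hα⟩

lemma mem_ker_cocycleClass_succ_iff {Y : C} {n : ℕ}
    (φ : LinearMap.ker (Linear.leftComp R Y (P.complex.d (n + 1 + 1) (n + 1)))) :
    φ ∈ LinearMap.ker (cocycleClass R P Y (n + 1)) ↔
      ∃ ψ : P.complex.X n ⟶ Y, P.complex.d (n + 1) n ≫ ψ = φ.1 :=
  P.extMk_eq_zero_iff φ.1 (n + 1 + 1) rfl φ.2 n rfl

/-- In positive degrees, the derived functor `Ext R C` of `Hom` agrees with `Abelian.Ext`; this
makes the long exact sequences of the latter available for `extMod`. -/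
noncomputable def extLinearEquiv [EnoughProjectives C] (X Y : C) (n : ℕ) :
    ((Ext R C (n + 1)).obj (.op X)).obj Y ≃ₗ[R] Abelian.Ext X Y (n + 1) :=
  let P := projectiveResolution X
  let K := P.complex.linearYonedaObj R Y
  let S := K.sc' n (n + 1) (n + 1 + 1)
  let Z := LinearMap.ker (Linear.leftComp R Y (P.complex.d (n + 1 + 1) (n + 1)))
  let B : Submodule R Z := LinearMap.range S.moduleCatToCycles
  let e : ((Ext R C (n + 1)).obj (.op X)).obj Y ≃ₗ[R] Z ⧸ B :=
    (P.isoExt (n + 1) Y ≪≫ ShortComplex.homologyMapIso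
      (K.isoSc' n (n + 1) (n + 1 + 1) (by simp) (by simp)) ≪≫ S.moduleCatHomologyIso).toLinearEquiv
  have hB : B = LinearMap.ker (cocycleClass R P Y (n + 1)) := by
    ext φ
    exact (exists_congr fun ψ ↦ Subtype.ext_iff).trans (mem_ker_cocycleClass_succ_iff P φ).symm
  e ≪≫ₗ Submodule.quotEquivOfEq B _ hB ≪≫ₗ
    (cocycleClass R P Y (n + 1)).quotKerEquivOfSurjective (cocycleClass_surjective P Y (n + 1))

end Comparison

section Coherent

variable {R : Type u} [CommRing R]

theorem IsCoherentRing.finitePresentation_of_injective_pi (hR : IsCoherentRing R) {n : ℕ}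
    {K : Type*} [AddCommGroup K] [Module R K] [Module.Finite R K]
    (f : K →ₗ[R] (Fin n → R)) (hf : Function.Injective f) : Module.FinitePresentation R K := by
  induction n generalizing K with
  | zero =>
    have : Subsingleton K := hf.subsingleton
    exact Module.finitePresentation_of_projective R K
  | succ n ih =>
    let a : K →ₗ[R] R := LinearMap.proj 0 ∘ₗ f
    have ha : Function.Surjective a.rangeRestrict := a.surjective_rangeRestrict
    have : Module.FinitePresentation R (LinearMap.range a) :=
      hR _ (Module.Finite.iff_fg.1 inferInstance)
    have : Module.Finite R (LinearMap.ker a.rangeRestrict) :=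
      Module.Finite.iff_fg.2 (Module.FinitePresentation.fg_ker _ ha)
    let tail : LinearMap.ker a.rangeRestrict →ₗ[R] (Fin n → R) :=
      LinearMap.funLeft R R Fin.succ ∘ₗ f ∘ₗ (LinearMap.ker a.rangeRestrict).subtype
    have tail_injective : Function.Injective tail := by
      intro x y hxy
      have a_eq_zero (z : LinearMap.ker a.rangeRestrict) : f z 0 = 0 := congrArg Subtype.val z.2
      refine Subtype.ext (hf (funext (Fin.cases ?_ (congrFun hxy))))
      rw [a_eq_zero x, a_eq_zero y]
    have : Module.FinitePresentation R (LinearMap.ker a.rangeRestrict) := ih tail tail_injective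
    exact Module.finitePresentation_of_ker a.rangeRestrict ha

theorem IsCoherentRing.exists_shortExact_projective (hR : IsCoherentRing R) (N : ModuleCat.{u} R)
    [Module.FinitePresentation R N] :
    ∃ S : ShortComplex (ModuleCat.{u} R), S.ShortExact ∧ S.X₃ = N ∧ Projective S.X₂ ∧
      Module.FinitePresentation R S.X₁ := by
  obtain ⟨n, p, hp⟩ := Module.Finite.exists_fin' R N
  have : Module.Finite R (LinearMap.ker p) :=
    Module.Finite.iff_fg.2 (Module.FinitePresentation.fg_ker p hp)
  exact ⟨p.shortComplexKer, LinearMap.shortExact_shortComplexKer hp, rfl,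
    (IsProjective.iff_projective _).1 inferInstance,
    hR.finitePresentation_of_injective_pi _ (Submodule.injective_subtype _)⟩

end Coherent

section GVTorsion

variable {R : Type u} [CommRing R] {M N : Type u} [AddCommGroup M] [Module R M] [AddCommGroup N]
  [Module R N]

theorem IsGVTorsion.of_injective (hN : IsGVTorsion R N) (f : M →ₗ[R] N)
    (hf : Function.Injective f) : IsGVTorsion R M := fun x ↦
  let ⟨J, hJ, hJx⟩ := hN (f x)
  ⟨J, hJ, fun j hj ↦ hf (by rw [map_smul, hJx j hj, map_zero])⟩

theorem IsGVTorsion.of_surjective (hM : IsGVTorsion R M) (f : M →ₗ[R] N)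
    (hf : Function.Surjective f) : IsGVTorsion R N := fun y ↦
  let ⟨x, hxy⟩ := hf y
  let ⟨J, hJ, hJx⟩ := hM x
  ⟨J, hJ, fun j hj ↦ by rw [← hxy, ← map_smul, hJx j hj, map_zero]⟩

end GVTorsion

section WPure

variable {R : Type u} [CommRing R]

theorem isAbsolutelyWPure_iff (A : ModuleCat.{u} R) :
    IsAbsolutelyWPure R A ↔ ∀ N : ModuleCat.{u} R, Module.FinitePresentation R N →
      IsGVTorsion R (Abelian.Ext N A 1) :=
  ⟨fun hA N hN ↦ (hA N hN).of_surjective _ (extLinearEquiv N A 0).surjective,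
    fun hA N _ _ hN ↦ (hA (.of R N) hN).of_injective _ (extLinearEquiv (.of R N) A 0).injective⟩

theorem isWFPProjective_iff (M : ModuleCat.{u} R) :
    IsWFPProjective R M ↔ ∀ A : ModuleCat.{u} R, IsAbsolutelyWPure R A →
      Subsingleton (Abelian.Ext M A 1) :=
  ⟨fun hM A hA ↦ (extLinearEquiv M A 0).toEquiv.subsingleton_congr.1 (hM A hA),
    fun hM A _ _ hA ↦ (extLinearEquiv M (.of R A) 0).toEquiv.subsingleton_congr.2 (hM (.of R A) hA)⟩

theorem IsAbsolutelyWPure.isGVTorsion_ext_succ (hR : IsCoherentRing R) {A : ModuleCat.{u} R}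
    (hA : IsAbsolutelyWPure R A) (n : ℕ) (N : ModuleCat.{u} R) [Module.FinitePresentation R N] :
    IsGVTorsion R (Abelian.Ext N A (n + 1)) := by
  induction n generalizing N with
  | zero => exact (isAbsolutelyWPure_iff A).1 hA N inferInstance
  | succ n ih =>
    obtain ⟨S, hS, rfl, _, _⟩ := hR.exists_shortExact_projective N
    exact (ih S.X₁).of_surjective (hS.extClass.precompOfLinear R A (add_comm 1 (n + 1)))
      (precomp_extClass_surjective_of_projective_X₂ A hS (n + 1))

theorem IsAbsolutelyWPure.X₃_of_shortExact (hR : IsCoherentRing R)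
    {S : ShortComplex (ModuleCat.{u} R)} (hS : S.ShortExact) [Injective S.X₂]
    (hA : IsAbsolutelyWPure R S.X₁) : IsAbsolutelyWPure R S.X₃ := by
  refine (isAbsolutelyWPure_iff S.X₃).2 fun N _ ↦ ?_
  refine (hA.isGVTorsion_ext_succ hR 1 N).of_injective (hS.extClass.postcompOfLinear R N rfl) ?_
  refine (injective_iff_map_eq_zero _).2 fun x hx ↦ ?_
  obtain ⟨y, rfl⟩ := Abelian.Ext.covariant_sequence_exact₃ N hS x rfl hx
  rw [Abelian.Ext.eq_zero_of_injective y, Abelian.Ext.zero_comp]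

theorem IsWFPProjective.subsingleton_ext_succ (hR : IsCoherentRing R) {M : ModuleCat.{u} R}
    (hM : IsWFPProjective R M) (n : ℕ) {A : ModuleCat.{u} R} (hA : IsAbsolutelyWPure R A) :
    Subsingleton (Abelian.Ext M A (n + 1)) := by
  induction n generalizing A with
  | zero => exact (isWFPProjective_iff M).1 hM A hA
  | succ n ih =>
    let I : InjectivePresentation A := Classical.arbitrary _
    have hI : I.shortComplex.ShortExact := I.shortExact_shortComplex
    have := ih (hA.X₃_of_shortExact hR hI)
    exact (postcomp_extClass_surjective_of_projective_X₂ hI M (n + 1)).subsingleton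

variable {S : ShortComplex (ModuleCat.{u} R)}

theorem IsWFPProjective.X₂_of_shortExact (hS : S.ShortExact) (h₁ : IsWFPProjective R S.X₁)
    (h₃ : IsWFPProjective R S.X₃) : IsWFPProjective R S.X₂ := by
  refine (isWFPProjective_iff S.X₂).2 fun A hA ↦ subsingleton_of_forall_eq 0 fun x ↦ ?_
  have := (isWFPProjective_iff S.X₁).1 h₁ A hA
  have := (isWFPProjective_iff S.X₃).1 h₃ A hA
  obtain ⟨y, rfl⟩ := Abelian.Ext.contravariant_sequence_exact₂ hS A x (Subsingleton.elim _ _)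
  rw [Subsingleton.elim y 0, Abelian.Ext.comp_zero]

theorem IsWFPProjective.X₁_of_shortExact (hR : IsCoherentRing R) (hS : S.ShortExact)
    (h₂ : IsWFPProjective R S.X₂) (h₃ : IsWFPProjective R S.X₃) : IsWFPProjective R S.X₁ := by
  refine (isWFPProjective_iff S.X₁).2 fun A hA ↦ subsingleton_of_forall_eq 0 fun x ↦ ?_
  have := (isWFPProjective_iff S.X₂).1 h₂ A hA
  have := h₃.subsingleton_ext_succ hR 1 hA
  obtain ⟨y, rfl⟩ := Abelian.Ext.contravariant_sequence_exact₁ hS A x rfl (Subsingleton.elim _ _)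
  rw [Subsingleton.elim y 0, Abelian.Ext.comp_zero]

end WPure

/-- Over a coherent ring, given `0 → M'' → M' → M → 0` exact with `M` `w`-FP-projective,
`M'` is `w`-FP-projective iff `M''` is. -/
theorem isWFPProjective_iff_of_exact (R : Type u) [CommRing R] (hR : IsCoherentRing R)
    (M'' M' M : Type u) [AddCommGroup M''] [Module R M''] [AddCommGroup M'] [Module R M']
    [AddCommGroup M] [Module R M]
    (f : M'' →ₗ[R] M') (g : M' →ₗ[R] M) (hf : Function.Injective f)
    (hg : Function.Surjective g) (hfg : Function.Exact f g)
    (hM : IsWFPProjective R M) :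
    IsWFPProjective R M' ↔ IsWFPProjective R M'' := by
  let S : ShortComplex (ModuleCat.{u} R) := .moduleCatMk f g hfg.linearMap_comp_eq_zero
  have hS : S.ShortExact := ModuleCat.shortComplex_shortExact S hfg hf hg
  exact ⟨fun hM' ↦ .X₁_of_shortExact hR hS hM' hM, fun hM'' ↦ .X₂_of_shortExact hS hM'' hM⟩
end

section
/- A commutative ring R is a coherent DW-ring if and only if every finitely generated ideal of R is w-FP-projective. -/
open CategoryTheory

universe u

/-!
`Ext¹(M, A) = 0` means that every map into `A` from the kernel of a projective presentation `F → M`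
extends to `F`. Over a DW-ring the only GV-ideal is `R`, so absolutely `w`-pure modules are
absolutely pure, which gives one direction.

Conversely, absolutely pure modules are absolutely `w`-pure. Present a finitely generated ideal as
`Rⁿ/K`. Testing it against the families in `∏ E(K/S)` that vanish for all large finitely generated
`S ≤ K`, where `E(Q)` is an injective module containing `Q`, shows that `K` is finitely
generated. If the ideal is a GV-ideal `J`, the module `K/JK` is GV-torsion, so `K → K/JK` extends to
`Rⁿ`, and Cayley–Hamilton turns this into a section of `Rⁿ → J` up to a scalar `u ∈ 1 + J`. As maps
`J → R` are multiplications by scalars, that section sends `x` to `x • r` for some `r ∈ Rⁿ`; hence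
`u` is the image of `r`, so `u ∈ J` and `J = R`.
-/

section ExtOne

variable {R : Type u} [CommRing R] {M A : Type u} [AddCommGroup M] [Module R M]
  [AddCommGroup A] [Module R A]

theorem smul_extMod_eq_zero {r : R} (hr : ∀ a : A, r • a = 0) {n : ℕ} (x : extMod R M A n) :
    r • x = 0 := by
  let P := ProjectiveResolution.of (ModuleCat.of R M)
  let C := P.complex.linearYonedaObj R (ModuleCat.of R A)
  have cochain_smul (f : C.X n) : r • f = 0 := by
    change r • (show P.complex.X n ⟶ ModuleCat.of R A from f) = 0
    ext x
    exact hr _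
  have cocycle_smul (z : C.cycles n) : r • z = 0 := by
    apply (ModuleCat.mono_iff_injective (C.iCycles n)).1 inferInstance
    rw [map_smul, cochain_smul, map_zero]
  let e : extMod R M A n ≅ C.homology n := P.isoExt n (ModuleCat.of R A)
  obtain ⟨z, hz⟩ := (ModuleCat.epi_iff_surjective (C.homologyπ n)).1 inferInstance (e.hom x)
  apply e.toLinearEquiv.injective
  change e.hom (r • x) = e.hom 0
  rw [map_smul, ← hz, ← map_smul, cocycle_smul, map_zero, map_zero]

theorem subsingleton_extMod_one_iff_projectiveResolution
    (P : ProjectiveResolution (ModuleCat.of R M)) :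
    Subsingleton (extMod R M A 1) ↔
      Function.Exact (LinearMap.lcomp R A (P.complex.d 1 0).hom)
        (LinearMap.lcomp R A (P.complex.d 2 1).hom) := by
  let C := P.complex.linearYonedaObj R (ModuleCat.of R A)
  let e : extMod R M A 1 ≅ C.homology 1 := P.isoExt 1 (ModuleCat.of R A)
  rw [← ModuleCat.isZero_iff_subsingleton, e.isZero_iff,
    ← HomologicalComplex.exactAt_iff_isZero_homology,
    HomologicalComplex.exactAt_iff' C 0 1 2 (by simp) (by simp),
    ShortComplex.ShortExact.moduleCat_exact_iff_function_exact]
  let homEquiv (n : ℕ) : C.X n ≃ₗ[R] (P.complex.X n →ₗ[R] A) :=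
    ModuleCat.homLinearEquiv (M := P.complex.X n) (N := ModuleCat.of R A)
  exact (Function.Exact.iff_of_ladder_linearEquiv (e₁ := homEquiv 0) (e₂ := homEquiv 1)
    (e₃ := homEquiv 2) (f₁₂ := (C.d 0 1).hom) (f₂₃ := (C.d 1 2).hom) rfl rfl).symm

theorem surjective_lcomp_ker_iff_exact {R P₀ P₁ P₂ M A : Type*} [CommRing R]
    [AddCommGroup P₀] [Module R P₀] [AddCommGroup P₁] [Module R P₁] [AddCommGroup P₂] [Module R P₂]
    [AddCommGroup M] [Module R M] [AddCommGroup A] [Module R A]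
    {d₁ : P₁ →ₗ[R] P₀} {d₂ : P₂ →ₗ[R] P₁} {ε : P₀ →ₗ[R] M}
    (h₂ : Function.Exact d₂ d₁) (h₁ : Function.Exact d₁ ε) :
    Function.Surjective (LinearMap.lcomp R A (LinearMap.ker ε).subtype) ↔
      Function.Exact (LinearMap.lcomp R A d₁) (LinearMap.lcomp R A d₂) := by
  let p : P₁ →ₗ[R] LinearMap.ker ε := d₁.codRestrict _ h₁.apply_apply_eq_zero
  have hp : Function.Surjective p := fun ⟨x, hx⟩ => by
    obtain ⟨y, rfl⟩ := (h₁ x).1 hx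
    exact ⟨y, rfl⟩
  have h₂p : Function.Exact d₂ p := fun x => by
    rw [← h₂ x, Subtype.ext_iff]
    rfl
  have exact_lcomp_p := LinearMap.exact_lcomp_of_exact_of_surjective A h₂p hp
  have inj := LinearMap.lcomp_injective_of_surjective (S := R) (N := A) p hp
  constructor
  · intro h f
    rw [exact_lcomp_p f]
    constructor
    · rintro ⟨φ, rfl⟩
      obtain ⟨g, rfl⟩ := h φ
      exact ⟨g, rfl⟩
    · rintro ⟨g, rfl⟩
      exact ⟨g ∘ₗ (LinearMap.ker ε).subtype, rfl⟩
  · intro h φ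
    obtain ⟨g, hg⟩ := (h (φ ∘ₗ p)).1 (exact_lcomp_p.apply_apply_eq_zero φ)
    exact ⟨g, inj hg⟩

theorem surjective_lcomp_ker_of_surjective_lcomp_ker {R F G M A : Type*} [CommRing R]
    [AddCommGroup F] [Module R F] [Module.Projective R F]
    [AddCommGroup G] [Module R G] [Module.Projective R G]
    [AddCommGroup M] [Module R M] [AddCommGroup A] [Module R A]
    {π : F →ₗ[R] M} {ε : G →ₗ[R] M} (hπ : Function.Surjective π) (hε : Function.Surjective ε)
    (h : Function.Surjective (LinearMap.lcomp R A (LinearMap.ker ε).subtype)) :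
    Function.Surjective (LinearMap.lcomp R A (LinearMap.ker π).subtype) := by
  intro φ
  obtain ⟨α, hα⟩ := Module.projective_lifting_property π ε hπ
  obtain ⟨β, hβ⟩ := Module.projective_lifting_property ε π hε
  replace hα (x : G) : π (α x) = ε x := LinearMap.congr_fun hα x
  replace hβ (x : F) : ε (β x) = π x := LinearMap.congr_fun hβ x
  let α' : LinearMap.ker ε →ₗ[R] LinearMap.ker π :=
    α.restrict fun x hx => by rwa [LinearMap.mem_ker, hα]
  let δ : F →ₗ[R] LinearMap.ker π :=
    (α ∘ₗ β - LinearMap.id).codRestrict _ fun x => by simp [hα, hβ]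
  obtain ⟨g, hg⟩ := h (φ ∘ₗ α')
  refine ⟨g ∘ₗ β - φ ∘ₗ δ, LinearMap.ext fun x => ?_⟩
  have hβx : β x ∈ LinearMap.ker ε := by rw [LinearMap.mem_ker, hβ, x.2]
  have hδx : δ x = α' ⟨β x, hβx⟩ - x := rfl
  have hgx : g (β x) = φ (α' ⟨β x, hβx⟩) := LinearMap.congr_fun hg ⟨β x, hβx⟩
  change g (β x) - φ (δ x) = φ x
  rw [hδx, map_sub, hgx, sub_sub_cancel]

theorem subsingleton_extMod_one_iff {F : Type u} [AddCommGroup F] [Module R F]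
    [Module.Projective R F] {π : F →ₗ[R] M} (hπ : Function.Surjective π) :
    Subsingleton (extMod R M A 1) ↔
      Function.Surjective (LinearMap.lcomp R A (LinearMap.ker π).subtype) := by
  let P := ProjectiveResolution.of (ModuleCat.of R M)
  let ε : P.complex.X 0 →ₗ[R] M := (P.π.f 0).hom
  have : Module.Projective R (P.complex.X 0) := (IsProjective.iff_projective _).2 (P.projective 0)
  have hε : Function.Surjective ε := (ModuleCat.epi_iff_surjective (P.π.f 0)).1 inferInstance
  have h₁ : Function.Exact (P.complex.d 1 0).hom ε :=
    (ShortComplex.ShortExact.moduleCat_exact_iff_function_exact _).1 P.exact₀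
  have h₂ : Function.Exact (P.complex.d 2 1).hom (P.complex.d 1 0).hom :=
    (ShortComplex.ShortExact.moduleCat_exact_iff_function_exact _).1 (P.exact_succ 0)
  rw [subsingleton_extMod_one_iff_projectiveResolution P, ← surjective_lcomp_ker_iff_exact h₂ h₁]
  exact ⟨surjective_lcomp_ker_of_surjective_lcomp_ker hπ hε,
    surjective_lcomp_ker_of_surjective_lcomp_ker hε hπ⟩

end ExtOne

section EventuallyZero

variable (R : Type*) [CommRing R] {ι : Type*} (l : Filter ι) (E : ι → Type*)
  [∀ i, AddCommGroup (E i)] [∀ i, Module R (E i)]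

/-- The families in `∏ i, E i` that vanish eventually along the filter `l`. -/
def eventuallyZero : Submodule R (∀ i, E i) where
  carrier := {x | ∀ᶠ i in l, x i = 0}
  zero_mem' := Filter.Eventually.of_forall fun _ => rfl
  add_mem' hx hy := by
    filter_upwards [hx, hy] with i hxi hyi
    rw [Pi.add_apply, hxi, hyi, add_zero]
  smul_mem' r x hx := by
    filter_upwards [hx] with i hxi
    rw [Pi.smul_apply, hxi, smul_zero]

variable {R l E}

theorem eventually_forall_apply_eq_zero {L : Type*} [AddCommGroup L] [Module R L]
    [Module.Finite R L] (φ : L →ₗ[R] eventuallyZero R l E) :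
    ∀ᶠ i in l, ∀ x, (φ x).1 i = 0 := by
  obtain ⟨s, hs⟩ := Module.Finite.fg_top (R := R) (M := L)
  have vanish_on_generators : ∀ᶠ i in l, ∀ x ∈ s, (φ x).1 i = 0 :=
    (Filter.eventually_all_finset s).2 fun x _ => (φ x).2
  filter_upwards [vanish_on_generators] with i hi x
  have span_le : Submodule.span R s ≤
      LinearMap.ker (LinearMap.proj i ∘ₗ (eventuallyZero R l E).subtype ∘ₗ φ) :=
    Submodule.span_le.2 hi
  exact span_le (hs ▸ Submodule.mem_top)

end EventuallyZero

theorem surjective_lcomp_eventuallyZero {R : Type u} [CommRing R] {ι : Type*} {l : Filter ι}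
    {E : ι → Type u} [∀ i, AddCommGroup (E i)] [∀ i, Module R (E i)]
    [∀ i, Module.Injective R (E i)] {L F : Type u} [AddCommGroup L] [Module R L]
    [Module.Finite R L] [AddCommGroup F] [Module R F] {f : L →ₗ[R] F}
    (hf : Function.Injective f) :
    Function.Surjective (LinearMap.lcomp R (eventuallyZero R l E) f) := by
  intro φ
  have coordinate (i : ι) : ∃ g : F →ₗ[R] E i,
      (∀ x, g (f x) = (φ x).1 i) ∧ ((∀ x, (φ x).1 i = 0) → g = 0) := by
    by_cases hi : ∀ x, (φ x).1 i = 0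
    · exact ⟨0, fun x => (hi x).symm, fun _ => rfl⟩
    · obtain ⟨g, hg⟩ := Module.Injective.out f hf
        (LinearMap.proj i ∘ₗ (eventuallyZero R l E).subtype ∘ₗ φ)
      exact ⟨g, hg, fun h => absurd h hi⟩
  choose g hg hg_zero using coordinate
  refine ⟨(LinearMap.pi g).codRestrict _ fun y => ?_, ?_⟩
  · filter_upwards [eventually_forall_apply_eq_zero φ] with i hi
    simp only [LinearMap.pi_apply, hg_zero i hi, LinearMap.zero_apply]
  · ext x i
    exact hg i x

/-- `A` is absolutely pure (FP-injective) if `Ext¹(N, A) = 0` for every finitely presented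
module `N`. -/
def IsAbsolutelyPure (R : Type u) [CommRing R] (A : Type u) [AddCommGroup A] [Module R A] : Prop :=
  ∀ (N : Type u) [AddCommGroup N] [Module R N], Module.FinitePresentation R N →
    Subsingleton (extMod R N A 1)

/-- `M` is FP-projective if `Ext¹(M, A) = 0` for every absolutely pure module `A`. -/
def IsFPProjective (R : Type u) [CommRing R] (M : Type u) [AddCommGroup M] [Module R M] : Prop :=
  ∀ (A : Type u) [AddCommGroup A] [Module R A], IsAbsolutelyPure R A →
    Subsingleton (extMod R M A 1)

section FPProjective

variable {R : Type u} [CommRing R]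

theorem isAbsolutelyPure_eventuallyZero {ι : Type u} {l : Filter ι} {E : ι → Type u}
    [∀ i, AddCommGroup (E i)] [∀ i, Module R (E i)] [∀ i, Module.Injective R (E i)] :
    IsAbsolutelyPure R (eventuallyZero R l E) := by
  intro N _ _ _
  obtain ⟨n, π, hπ⟩ := Module.Finite.exists_fin' R N
  have : Module.Finite R (LinearMap.ker π) := .of_fg (Module.FinitePresentation.fg_ker π hπ)
  exact (subsingleton_extMod_one_iff hπ).2
    (surjective_lcomp_eventuallyZero (LinearMap.ker π).injective_subtype)

theorem exists_injective_embedding (R : Type u) [CommRing R] (Q : Type u) [AddCommGroup Q]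
    [Module R Q] :
    ∃ E : ModuleCat.{u} R, Module.Injective R E ∧ ∃ i : Q →ₗ[R] E, Function.Injective i :=
  ⟨Injective.under (ModuleCat.of R Q),
    (Module.injective_iff_injective_object R _).2 (Injective.injective_under (ModuleCat.of R Q)),
    (Injective.ι (ModuleCat.of R Q)).hom, (ModuleCat.mono_iff_injective _).1 inferInstance⟩

theorem IsFPProjective.finitePresentation {M : Type u} [AddCommGroup M] [Module R M]
    [Module.Finite R M] (hM : IsFPProjective R M) : Module.FinitePresentation R M := by
  obtain ⟨n, π, hπ⟩ := Module.Finite.exists_fin' R M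
  rw [← Module.FinitePresentation.fg_ker_iff π hπ]
  let K := LinearMap.ker π
  choose E hE i hi using fun s : Finset K =>
    exists_injective_embedding R (K ⧸ Submodule.span R (s : Set K))
  let φ : K →ₗ[R] eventuallyZero R Filter.atTop fun s => E s :=
    (LinearMap.pi fun s => i s ∘ₗ Submodule.mkQ _).codRestrict _ fun x => by
      filter_upwards [Filter.eventually_ge_atTop {x}] with s hs
      have hx : x ∈ Submodule.span R (s : Set K) :=
        Submodule.subset_span (Finset.singleton_subset_iff.1 hs)
      simp [(Submodule.Quotient.mk_eq_zero _).2 hx]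
  obtain ⟨g, hg⟩ := (subsingleton_extMod_one_iff hπ).1 (hM _ isAbsolutelyPure_eventuallyZero) φ
  obtain ⟨s, hs⟩ := (eventually_forall_apply_eq_zero g).exists
  have mem_span (x : K) : x ∈ Submodule.span R (s : Set K) := by
    have hx : i s (Submodule.Quotient.mk x) = 0 := by
      rw [← hs x]
      exact congrArg (fun y => y.1 s) (LinearMap.congr_fun hg x).symm
    rw [← Submodule.Quotient.mk_eq_zero]
    exact hi s (hx.trans (map_zero _).symm)
  exact Module.Finite.iff_fg.1 ⟨s, Submodule.eq_top_iff'.2 mem_span⟩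

end FPProjective

section GVIdeal

variable {R : Type u} [CommRing R]

theorem isGVIdeal_top : IsGVIdeal R ⊤ := by
  refine ⟨⟨{1}, by simp⟩, fun r s h => ?_, fun f => ⟨f ⟨1, trivial⟩, ?_⟩⟩
  · simpa using LinearMap.congr_fun h ⟨1, trivial⟩
  · ext x
    have hx : x = (x : R) • (⟨1, trivial⟩ : (⊤ : Ideal R)) := Subtype.ext (by simp)
    conv_rhs => rw [hx, map_smul]
    simp [mul_comm]

namespace IsGVIdeal

variable {J : Ideal R}

theorem eq_of_forall_mul_eq (hJ : IsGVIdeal R J) {r s : R} (h : ∀ x ∈ J, r * x = s * x) :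
    r = s :=
  hJ.2.1 (LinearMap.ext fun x => h x x.2)

theorem exists_forall_apply_eq_smul (hJ : IsGVIdeal R J) {ι : Type*} (f : J →ₗ[R] ι → R) :
    ∃ r : ι → R, ∀ x : J, f x = (x : R) • r := by
  choose r hr using fun i => hJ.2.2 (LinearMap.proj i ∘ₗ f)
  refine ⟨r, fun x => funext fun i => ?_⟩
  rw [Pi.smul_apply, smul_eq_mul, mul_comm]
  exact (LinearMap.congr_fun (hr i) x).symm

theorem mem_of_comp_eq_smul_id (hJ : IsGVIdeal R J) {ι : Type*} {π : (ι → R) →ₗ[R] J}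
    {s : J →ₗ[R] ι → R} {u : R} (h : π ∘ₗ s = u • LinearMap.id) : u ∈ J := by
  obtain ⟨r, hr⟩ := hJ.exists_forall_apply_eq_smul s
  have hu : u = π r := hJ.eq_of_forall_mul_eq fun x hx => by
    have hsx : π (s ⟨x, hx⟩) = u • ⟨x, hx⟩ := LinearMap.congr_fun h _
    rw [hr, map_smul] at hsx
    calc u * x = x * π r := congrArg Subtype.val hsx.symm
      _ = π r * x := mul_comm _ _
  exact hu ▸ (π r).2

theorem isAbsolutelyWPure_of_smul_eq_zero (hJ : IsGVIdeal R J) {A : Type u} [AddCommGroup A]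
    [Module R A] (hA : ∀ j ∈ J, ∀ a : A, j • a = 0) : IsAbsolutelyWPure R A :=
  fun _ _ _ _ x => ⟨J, hJ, fun j hj => smul_extMod_eq_zero (hA j hj) x⟩

end IsGVIdeal

theorem isDWRing_iff_forall_isGVIdeal_eq_top :
    IsDWRing R ↔ ∀ J : Ideal R, IsGVIdeal R J → J = ⊤ := by
  constructor
  · intro hR J hJ
    by_contra hne
    obtain ⟨m, hm, hJm⟩ := J.exists_le_maximal hne
    have one_mem : 1 ∈ m := hR m hm 1 J hJ fun j hj => by simpa using hJm hj
    exact hm.ne_top (m.eq_top_iff_one.2 one_mem)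
  · intro h m _ x J hJ hx
    simpa using hx 1 (h J hJ ▸ trivial)

theorem IsDWRing.isAbsolutelyPure (hR : IsDWRing R) {A : Type u} [AddCommGroup A] [Module R A]
    (hA : IsAbsolutelyWPure R A) : IsAbsolutelyPure R A := fun N _ _ hN =>
  subsingleton_of_forall_eq 0 fun x => by
    obtain ⟨J, hJ, hx⟩ := hA N hN x
    simpa using hx 1 (isDWRing_iff_forall_isGVIdeal_eq_top.1 hR J hJ ▸ trivial)

theorem IsAbsolutelyPure.isAbsolutelyWPure {A : Type u} [AddCommGroup A] [Module R A]
    (hA : IsAbsolutelyPure R A) : IsAbsolutelyWPure R A := fun N _ _ hN _ =>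
  have := hA N hN
  ⟨⊤, isGVIdeal_top, fun _ _ => Subsingleton.elim _ _⟩

theorem IsWFPProjective.isFPProjective {M : Type u} [AddCommGroup M] [Module R M]
    (hM : IsWFPProjective R M) : IsFPProjective R M :=
  fun A _ _ hA => hM A hA.isAbsolutelyWPure

end GVIdeal

section PartialSection

theorem exists_sub_one_mem_and_mul_eq_algebraMap {R M : Type*} [CommRing R] [AddCommGroup M]
    [Module R M] [Module.Finite R M] {I : Ideal R} {e : Module.End R M}
    (he : LinearMap.range (1 - e) ≤ I • ⊤) :
    ∃ u : R, u - 1 ∈ I ∧ ∃ q : Module.End R M, q * e = algebraMap R _ u := by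
  obtain ⟨p, hp, -, hcoeff, hroot⟩ :=
    LinearMap.exists_monic_and_natDegree_eq_and_coeff_mem_pow_and_aeval_eq_zero R (1 - e) I he
  refine ⟨p.eval 1, ?_, ?_⟩
  · rw [Polynomial.eval_eq_sum_range, Finset.sum_range_succ, hp.coeff_natDegree]
    simp only [one_pow, mul_one, add_sub_cancel_right]
    refine I.sum_mem fun k hk => Ideal.pow_le_self ?_ (hcoeff k)
    exact Nat.sub_ne_zero_of_lt (Finset.mem_range.1 hk)
  · obtain ⟨q, hq⟩ := Polynomial.X_sub_C_dvd_sub_C_eval (a := (1 : R)) (p := p)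
    refine ⟨Polynomial.aeval (1 - e) q, ?_⟩
    have h := congrArg (Polynomial.aeval (1 - e)) hq
    rw [mul_comm] at h
    simpa [hroot] using h.symm

theorem exists_comp_eq_smul_id {R F M : Type*} [CommRing R] [AddCommGroup F] [Module R F]
    [AddCommGroup M] [Module R M] {π : F →ₗ[R] M} (hπ : Function.Surjective π) {u : R}
    {g : F →ₗ[R] LinearMap.ker π} (hg : g ∘ₗ (LinearMap.ker π).subtype = u • LinearMap.id) :
    ∃ s : M →ₗ[R] F, π ∘ₗ s = u • LinearMap.id := by
  obtain ⟨s, hs⟩ := (LinearMap.exact_lcomp_of_exact_of_surjective F π.exact_subtype_ker_map hπ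
    (u • LinearMap.id - (LinearMap.ker π).subtype ∘ₗ g)).1 <| LinearMap.ext fun x => by
      simpa [sub_eq_zero] using congrArg Subtype.val (LinearMap.congr_fun hg x).symm
  refine ⟨s, LinearMap.ext fun x => ?_⟩
  obtain ⟨y, rfl⟩ := hπ x
  have hsy : s (π y) = u • y - g y := LinearMap.congr_fun hs y
  simp [hsy]

theorem exists_sub_one_mem_and_comp_eq_smul_id {R : Type u} [CommRing R] {F M : Type u}
    [AddCommGroup F] [Module R F] [Module.Finite R F] [Module.Projective R F]
    [AddCommGroup M] [Module R M] [Module.FinitePresentation R M] {π : F →ₗ[R] M}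
    (hπ : Function.Surjective π) {I : Ideal R}
    (hM : ∀ (A : Type u) [AddCommGroup A] [Module R A], (∀ r ∈ I, ∀ a : A, r • a = 0) →
      Subsingleton (extMod R M A 1)) :
    ∃ u : R, u - 1 ∈ I ∧ ∃ s : M →ₗ[R] F, π ∘ₗ s = u • LinearMap.id := by
  have : Module.Finite R (LinearMap.ker π) := .of_fg (Module.FinitePresentation.fg_ker π hπ)
  let T : Submodule R (LinearMap.ker π) := I • ⊤
  have smul_quotient (r : R) (hr : r ∈ I) (a : LinearMap.ker π ⧸ T) : r • a = 0 := by
    obtain ⟨x, rfl⟩ := T.mkQ_surjective a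
    exact (Submodule.Quotient.mk_eq_zero T).2 (Submodule.smul_mem_smul hr trivial)
  obtain ⟨f, hf⟩ := (subsingleton_extMod_one_iff hπ).1 (hM _ smul_quotient) T.mkQ
  obtain ⟨g, rfl⟩ := Module.projective_lifting_property T.mkQ f T.mkQ_surjective
  have range_le : LinearMap.range (1 - g ∘ₗ (LinearMap.ker π).subtype) ≤ I • ⊤ := by
    rintro _ ⟨x, rfl⟩
    have hx : T.mkQ (g x) = T.mkQ x := LinearMap.congr_fun hf x
    change x - g x ∈ T
    rw [← Submodule.Quotient.eq]
    exact hx.symm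
  obtain ⟨u, hu, q, hq⟩ := exists_sub_one_mem_and_mul_eq_algebraMap range_le
  exact ⟨u, hu, exists_comp_eq_smul_id hπ (g := q ∘ₗ g) hq⟩

end PartialSection

theorem IsGVIdeal.eq_top_of_isWFPProjective {R : Type u} [CommRing R] {J : Ideal R}
    (hJ : IsGVIdeal R J) (hP : IsWFPProjective R J) : J = ⊤ := by
  have : Module.Finite R J := .of_fg hJ.1
  have := hP.isFPProjective.finitePresentation
  obtain ⟨n, π, hπ⟩ := Module.Finite.exists_fin' R J
  obtain ⟨u, hu, s, hs⟩ := exists_sub_one_mem_and_comp_eq_smul_id hπ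
    fun A _ _ hA => hP A (hJ.isAbsolutelyWPure_of_smul_eq_zero hA)
  rw [J.eq_top_iff_one]
  simpa using J.sub_mem (hJ.mem_of_comp_eq_smul_id hs) hu

/-- `R` is a coherent DW-ring iff every finitely generated ideal is `w`-FP-projective. -/
theorem isCoherentDW_iff_fg_ideal_wFPProjective (R : Type u) [CommRing R] :
    (IsCoherentRing R ∧ IsDWRing R) ↔
      ∀ I : Ideal R, I.FG → IsWFPProjective R I := by
  constructor
  · rintro ⟨hcoh, hDW⟩ I hI A _ _ hA
    exact hDW.isAbsolutelyPure hA I (hcoh I hI)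
  · intro h
    refine ⟨fun I hI => ?_, isDWRing_iff_forall_isGVIdeal_eq_top.2 fun J hJ => ?_⟩
    · have : Module.Finite R I := .of_fg hI
      exact (h I hI).isFPProjective.finitePresentation
    · exact hJ.eq_top_of_isWFPProjective (h J hJ.1)
end
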